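/- Let B be a symplectic form on a 2J-dimensional vector space V over F_2 and Q a quadratic form yielding B, with quadric 𝒬. (i) For every linear automorphism A of V preserving B there exists a unique vector v_A ∈ 𝒬 such that Q(Av + v_A) = Q(v) for all v ∈ V. (ii) The induced action is doubly transitive both on 𝒬 and on its complement: for any q₁ ≠ q₂ and q₃ ≠ q₄ all lying in 𝒬 (respectively, all lying in V ∖ 𝒬), there exist a B-preserving linear automorphism A of V and a vector w ∈ V such that Q(Av + w) = Q(v) for all v ∈ V, A·q₁ + w = q₃, and A·q₂ + w = q₄. -/

import Mathlib

noncomputable section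

/-- A bilinear form is symplectic: alternating and nondegenerate. -/
def IsSymplectic {F V : Type*} [CommRing F] [AddCommGroup V] [Module F V]
    (B : V →ₗ[F] V →ₗ[F] F) : Prop :=
  (∀ v, B v v = 0) ∧ ∀ v : V, v ≠ 0 → ∃ w, B v w ≠ 0

/-- `Q` is a quadratic form yielding the bilinear form `B` over `F₂`. -/
def YieldsForm {V : Type*} [AddCommGroup V] [Module (ZMod 2) V]
    (B : V →ₗ[ZMod 2] V →ₗ[ZMod 2] ZMod 2) (Q : V → ZMod 2) : Prop :=
  ∀ v₁ v₂ : V, Q (v₁ + v₂) + Q v₁ + Q v₂ = B v₁ v₂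

/-- The quadric of a quadratic form: its set of zeros. -/
def quadric {V : Type*} (Q : V → ZMod 2) : Set V := {v | Q v = 0}

/-!
Let `ψ` be the nontrivial additive character of `𝔽₂`. The Gauss sum `∑ x, ψ (Q x)` squares to `|V|`,
hence is nonzero. For `A` preserving `B`, the function `v ↦ Q v + Q (A v)` is additive, so it equals
`B (A v) w` for some `w`, and `Q (A v + w) = Q v + Q w`. Summing over `v` multiplies the Gauss sum
by `ψ (Q w)`, which forces `Q w = 0`.

For double transitivity, each `u` gives an affine transvection exchanging `v` and `v + u` whenever
`Q (v + u) = Q v` and fixing all other vectors. On the level set of `Q` through `q`, with `q`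
removed, the transvection along `a + b` fixes `q` and exchanges `a` and `b` as soon as
`B (q + a) (q + b) ≠ 0`, and any two points for which this fails have a common neighbor for this
relation.
-/

theorem IsSymplectic.separatingLeft {F V : Type*} [CommRing F] [AddCommGroup V] [Module F V]
    {B : V →ₗ[F] V →ₗ[F] F} (hB : IsSymplectic B) : B.SeparatingLeft := by
  intro v hv
  by_contra hv0
  obtain ⟨w, hw⟩ := hB.2 v hv0
  exact hw (hv w)

/-- The group of affine automorphisms `f` of `V` with `Q ∘ f = Q`. For `Q` a quadratic form over
`𝔽₂` its elements are the maps `v ↦ A v + v_A` of the affine symplectic action. -/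
def affineStabilizer (k : Type*) {V α : Type*} [Ring k] [AddCommGroup V] [Module k V]
    (Q : V → α) : Subgroup (V ≃ᵃ[k] V) where
  carrier := {f | ∀ v, Q (f v) = Q v}
  mul_mem' {f g} hf hg v := (hf (g v)).trans (hg v)
  one_mem' _ := rfl
  inv_mem' {f} hf v := by simpa [AffineEquiv.inv_def] using (hf (f.symm v)).symm

theorem zmod_two_eq_one_of_ne_zero {a : ZMod 2} (ha : a ≠ 0) : a = 1 :=
  Fin.eq_one_of_ne_zero a ha

theorem sum_addChar_comp_eq_zero {G A R : Type*} [AddGroup G] [Fintype G] [AddMonoid A]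
    [CommRing R] [IsDomain R] {ψ : AddChar A R} (hψ : Function.Injective ψ) {l : G →+ A}
    (hl : l ≠ 0) : ∑ x, ψ (l x) = 0 := by
  have hne : ψ.compAddMonoidHom l ≠ 1 := by
    obtain ⟨x, hx⟩ := DFunLike.ne_iff.mp hl
    exact AddChar.ne_one_iff.mpr ⟨x, fun h => hx (hψ (h.trans ψ.map_zero_eq_one.symm))⟩
  exact AddChar.sum_eq_zero_of_ne_one hne

theorem exists_map_ne_zero_and_map_ne_zero {M N P F G : Type*} [AddZeroClass M] [AddZeroClass N]
    [AddZeroClass P] [FunLike F M N] [AddHomClass F M N] [FunLike G M P] [AddHomClass G M P]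
    {f : F} {g : G} (hf : ∃ x, f x ≠ 0) (hg : ∃ x, g x ≠ 0) : ∃ x, f x ≠ 0 ∧ g x ≠ 0 := by
  obtain ⟨x, hx⟩ := hf
  obtain ⟨y, hy⟩ := hg
  by_cases hgx : g x = 0
  · by_cases hfy : f y = 0
    · exact ⟨x + y, by simpa [hfy] using hx, by simpa [hgx] using hy⟩
    · exact ⟨y, hfy, hy⟩
  · exact ⟨x, hx, hgx⟩

namespace YieldsForm

variable {V : Type*} [AddCommGroup V] [Module (ZMod 2) V]
  {B : V →ₗ[ZMod 2] V →ₗ[ZMod 2] ZMod 2} {Q : V → ZMod 2}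

protected theorem map_add (hQ : YieldsForm B Q) (x y : V) : Q (x + y) = Q x + Q y + B x y := by
  grind [hQ x y]

protected theorem map_zero (hQ : YieldsForm B Q) : Q 0 = 0 := by
  simpa using hQ.map_add 0 0

theorem isAlt (hQ : YieldsForm B Q) : B.IsAlt := by
  intro v
  simpa [ZModModule.add_self, CharTwo.add_self_eq_zero, hQ.map_zero, add_assoc] using (hQ v v).symm

theorem bilin_comm (hQ : YieldsForm B Q) (x y : V) : B x y = B y x := by
  rw [← hQ.isAlt.neg y x, ZModModule.neg_eq_self]

theorem sum_stdAddChar_sq [Fintype V] (hQ : YieldsForm B Q) (hB : B.SeparatingLeft) :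
    (∑ x, ZMod.stdAddChar (Q x)) ^ 2 = Fintype.card V := by
  set ψ : AddChar (ZMod 2) ℂ := ZMod.stdAddChar
  have sum_bilin {h : V} (hh : h ≠ 0) : ∑ x, ψ (B h x) = 0 :=
    sum_addChar_comp_eq_zero (l := (B h).toAddMonoidHom) ZMod.injective_stdAddChar
      fun hBh => hh (hB h fun x => DFunLike.congr_fun hBh x)
  have mul_shift (x h : V) : ψ (Q x) * ψ (Q (x + h)) = ψ (Q h) * ψ (B h x) := by
    rw [← AddChar.map_add_eq_mul, ← AddChar.map_add_eq_mul, hQ.map_add, hQ.bilin_comm x]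
    congr 1
    grind
  calc (∑ x, ψ (Q x)) ^ 2
      = ∑ x, ∑ h, ψ (Q x) * ψ (Q (x + h)) := by
        rw [sq, Finset.sum_mul]
        refine Finset.sum_congr rfl fun x _ => ?_
        rw [← Finset.mul_sum, ← Equiv.sum_comp (Equiv.addLeft x)]
        rfl
    _ = ∑ h, ψ (Q h) * ∑ x, ψ (B h x) := by
        rw [Finset.sum_comm]
        simp only [mul_shift, Finset.mul_sum]
    _ = ψ (Q 0) * ∑ x, ψ (B 0 x) :=
        Fintype.sum_eq_single 0 fun h hh => by rw [sum_bilin hh, mul_zero]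
    _ = Fintype.card V := by simp [hQ.map_zero]

theorem sum_stdAddChar_ne_zero [Fintype V] (hQ : YieldsForm B Q) (hB : B.SeparatingLeft) :
    ∑ x, ZMod.stdAddChar (Q x) ≠ 0 := by
  refine ne_zero_pow two_ne_zero ?_
  rw [hQ.sum_stdAddChar_sq hB]
  exact Nat.cast_ne_zero.mpr Fintype.card_ne_zero

theorem eq_zero_of_forall_map_perm_eq_add [Finite V] (hQ : YieldsForm B Q) (hB : B.SeparatingLeft)
    (e : Equiv.Perm V) {c : ZMod 2} (he : ∀ v, Q (e v) = Q v + c) : c = 0 := by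
  have := Fintype.ofFinite V
  have hsum : (∑ v, ZMod.stdAddChar (Q v)) * ZMod.stdAddChar c = ∑ v, ZMod.stdAddChar (Q v) := by
    simp only [Finset.sum_mul, ← AddChar.map_add_eq_mul, ← he]
    exact Equiv.sum_comp e fun v => ZMod.stdAddChar (Q v)
  have hc : ZMod.stdAddChar c = 1 := mul_eq_left₀ (hQ.sum_stdAddChar_ne_zero hB) |>.mp hsum
  exact ZMod.injective_stdAddChar (hc.trans (AddChar.map_zero_eq_one _).symm)

theorem exists_forall_map_add_eq [Finite V] (hQ : YieldsForm B Q) (hB : B.SeparatingLeft)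
    {A : V ≃ₗ[ZMod 2] V} (hA : ∀ x y, B (A x) (A y) = B x y) :
    ∃ w, ∀ v, Q (A v + w) = Q v + Q w := by
  let defect : V →ₗ[ZMod 2] ZMod 2 := AddMonoidHom.toZModLinearMap 2
    { toFun := fun v => Q v + Q (A v)
      map_zero' := by simp [hQ.map_zero]
      map_add' := fun x y => by
        rw [map_add, hQ.map_add, hQ.map_add, hA]
        grind }
  have hB' : LinearMap.BilinForm.Nondegenerate B :=
    hQ.isAlt.isRefl.nondegenerate_iff_separatingLeft.mpr hB
  let w := (LinearMap.BilinForm.toDual B hB').symm (defect ∘ₗ A.symm)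
  have hw (v : V) : B w (A v) = Q v + Q (A v) := by
    simp [w, defect, LinearMap.BilinForm.apply_toDual_symm_apply]
  refine ⟨w, fun v => ?_⟩
  rw [hQ.map_add, hQ.bilin_comm, hw]
  grind

theorem eq_of_forall_map_add_eq (hQ : YieldsForm B Q) (hB : B.SeparatingLeft) {w w' : V}
    (h : ∀ v, Q (v + w) = Q (v + w')) : w = w' := by
  refine sub_eq_zero.mp (hB _ fun v => ?_)
  have h0 : Q w = Q w' := by simpa using h 0
  have hv := h v
  rw [hQ.map_add, hQ.map_add, h0, add_right_inj] at hv
  rw [map_sub, LinearMap.sub_apply, hQ.bilin_comm w, hQ.bilin_comm w', hv, sub_self]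

theorem existsUnique_mem_quadric_forall_map_add_eq [Finite V] (hQ : YieldsForm B Q)
    (hB : B.SeparatingLeft) {A : V ≃ₗ[ZMod 2] V} (hA : ∀ x y, B (A x) (A y) = B x y) :
    ∃! w, w ∈ quadric Q ∧ ∀ v, Q (A v + w) = Q v := by
  obtain ⟨w, hw⟩ := hQ.exists_forall_map_add_eq hB hA
  have hQw : Q w = 0 :=
    hQ.eq_zero_of_forall_map_perm_eq_add hB (A.toEquiv.trans (Equiv.addRight w)) hw
  have hAw (v : V) : Q (A v + w) = Q v := by rw [hw, hQw, add_zero]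
  refine ⟨w, ⟨hQw, hAw⟩, fun w' hw' => hQ.eq_of_forall_map_add_eq hB fun v => ?_⟩
  obtain ⟨v, rfl⟩ := A.surjective v
  rw [hw'.2, hAw]

theorem bilin_linear_of_mem_affineStabilizer (hQ : YieldsForm B Q) {f : V ≃ᵃ[ZMod 2] V}
    (hf : f ∈ affineStabilizer (ZMod 2) Q) (x y : V) :
    B (f.linear x) (f.linear y) = B x y := by
  have map_eq (v : V) : Q (f.linear v) + Q (f 0) + B (f.linear v) (f 0) = Q v := by
    rw [← hQ.map_add, ← vadd_eq_add, ← f.map_vadd, vadd_eq_add, add_zero, hf]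
  have hxy := map_eq (x + y)
  rw [map_add, hQ.map_add, hQ.map_add, map_add, LinearMap.add_apply] at hxy
  have h0 : Q (f 0) = 0 := (hf 0).trans hQ.map_zero
  grind [map_eq x, map_eq y]

/-- The symplectic transvection `v ↦ v + B u v • u` followed by the translation by `(Q u + 1) • u`,
the translation being chosen so that the composite preserves `Q`. -/
def affineTransvection (hQ : YieldsForm B Q) (u : V) : V ≃ᵃ[ZMod 2] V :=
  (LinearEquiv.transvection (hQ.isAlt u)).toAffineEquiv.trans
    (AffineEquiv.constVAdd (ZMod 2) V ((Q u + 1) • u))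

theorem affineTransvection_apply (hQ : YieldsForm B Q) (u v : V) :
    hQ.affineTransvection u v = if Q (v + u) = Q v then v + u else v := by
  have apply_eq : hQ.affineTransvection u v = v + (Q (v + u) + Q v + 1) • u := by
    have hcoeff : Q (v + u) + Q v + 1 = B u v + (Q u + 1) := by
      rw [hQ.map_add, hQ.bilin_comm]
      grind
    rw [hcoeff, add_smul, ← add_assoc, add_comm]
    rfl
  split_ifs with h
  · rw [apply_eq, h, CharTwo.add_self_eq_zero, zero_add, one_smul]
  · have hone : Q (v + u) + Q v = 1 := zmod_two_eq_one_of_ne_zero (mt CharTwo.add_eq_zero.mp h)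
    rw [apply_eq, hone, CharTwo.add_self_eq_zero, zero_smul, add_zero]

theorem affineTransvection_mem_affineStabilizer (hQ : YieldsForm B Q) (u : V) :
    hQ.affineTransvection u ∈ affineStabilizer (ZMod 2) Q := by
  intro v
  rw [affineTransvection_apply]
  split_ifs with h
  exacts [h, rfl]

theorem affineTransvection_add_apply_left (hQ : YieldsForm B Q) {a b : V} (hab : Q a = Q b) :
    hQ.affineTransvection (a + b) a = b := by
  have : a + (a + b) = b := by rw [← add_assoc, ZModModule.add_self, zero_add]
  rw [affineTransvection_apply, this, if_pos hab.symm]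

theorem exists_mem_affineStabilizer_fixing_of_bilin_ne_zero (hQ : YieldsForm B Q) {q a b : V}
    (ha : Q a = Q q) (hb : Q b = Q q) (hab : B (q + a) (q + b) ≠ 0) :
    ∃ f ∈ affineStabilizer (ZMod 2) Q, f q = q ∧ f a = b := by
  refine ⟨_, hQ.affineTransvection_mem_affineStabilizer (a + b), ?_,
    hQ.affineTransvection_add_apply_left (ha.trans hb.symm)⟩
  have hq : Q (q + (a + b)) ≠ Q q := by
    simp only [hQ.map_add, map_add, LinearMap.add_apply, hQ.isAlt q, hQ.bilin_comm a q]
      at hab ⊢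
    grind
  rw [affineTransvection_apply, if_neg hq]

theorem exists_bilin_add_ne_zero_and_bilin_add_ne_zero (hQ : YieldsForm B Q)
    (hB : B.SeparatingLeft) {q a b : V} (ha : Q a = Q q) (haq : a ≠ q) (hbq : b ≠ q)
    (hab : B (q + a) (q + b) = 0) :
    ∃ c, Q c = Q q ∧ B (q + a) (q + c) ≠ 0 ∧ B (q + b) (q + c) ≠ 0 := by
  have exists_bilin_ne_zero {x : V} (hx : x ≠ q) : ∃ y, B (q + x) y ≠ 0 := by
    by_contra! h
    have hqx : q + x = 0 := hB _ h
    rw [← ZModModule.sub_eq_add, sub_eq_zero] at hqx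
    exact hx hqx.symm
  suffices ∃ d, Q (q + d) = Q q ∧ B (q + a) d ≠ 0 ∧ B (q + b) d ≠ 0 by
    obtain ⟨d, hd⟩ := this
    exact ⟨q + d, by rwa [← add_assoc, ZModModule.add_self, zero_add]⟩
  obtain ⟨d, had, hbd⟩ :=
    exists_map_ne_zero_and_map_ne_zero (exists_bilin_ne_zero haq) (exists_bilin_ne_zero hbq)
  by_cases hd : Q (q + d) = Q q
  · exact ⟨d, hd, had, hbd⟩
  · -- Adding `q + a` to `d` changes neither pairing, but it changes the value of `Q` at `q + d`.
    refine ⟨d + (q + a), ?_, ?_, ?_⟩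
    · have hsum : q + (d + (q + a)) = d + a := by
        rw [add_left_comm, ← add_assoc q, ZModModule.add_self, zero_add]
      have hqd : Q d + B q d = 1 := zmod_two_eq_one_of_ne_zero fun h =>
        hd (by rw [hQ.map_add, add_assoc, h, add_zero])
      have hqad : B q d + B a d = 1 := zmod_two_eq_one_of_ne_zero (by
        rwa [← LinearMap.add_apply, ← map_add])
      rw [hsum, hQ.map_add, hQ.bilin_comm d]
      grind
    · rwa [map_add, hQ.isAlt, add_zero]
    · rwa [map_add, hQ.bilin_comm (q + b) (q + a), hab, add_zero]

theorem exists_mem_affineStabilizer_fixing (hQ : YieldsForm B Q) (hB : B.SeparatingLeft)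
    {q a b : V} (ha : Q a = Q q) (hb : Q b = Q q) (haq : a ≠ q) (hbq : b ≠ q) :
    ∃ f ∈ affineStabilizer (ZMod 2) Q, f q = q ∧ f a = b := by
  by_cases hab : B (q + a) (q + b) = 0
  · obtain ⟨c, hc, hac, hbc⟩ := hQ.exists_bilin_add_ne_zero_and_bilin_add_ne_zero hB ha haq hbq hab
    rw [hQ.bilin_comm] at hbc
    obtain ⟨f, hf, hfq, hfa⟩ := hQ.exists_mem_affineStabilizer_fixing_of_bilin_ne_zero ha hc hac
    obtain ⟨g, hg, hgq, hgc⟩ := hQ.exists_mem_affineStabilizer_fixing_of_bilin_ne_zero hc hb hbc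
    exact ⟨g * f, mul_mem hg hf, by simp [hfq, hgq], by simp [hfa, hgc]⟩
  · exact hQ.exists_mem_affineStabilizer_fixing_of_bilin_ne_zero ha hb hab

theorem exists_mem_affineStabilizer_map_pair (hQ : YieldsForm B Q) (hB : B.SeparatingLeft)
    {q₁ q₂ q₃ q₄ : V} (h₁₂ : Q q₁ = Q q₂) (h₁₃ : Q q₁ = Q q₃) (h₁₄ : Q q₁ = Q q₄)
    (hne₁₂ : q₁ ≠ q₂) (hne₃₄ : q₃ ≠ q₄) :
    ∃ f ∈ affineStabilizer (ZMod 2) Q, f q₁ = q₃ ∧ f q₂ = q₄ := by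
  let f := hQ.affineTransvection (q₁ + q₃)
  have hf : f ∈ affineStabilizer (ZMod 2) Q := hQ.affineTransvection_mem_affineStabilizer _
  have hf₁ : f q₁ = q₃ := hQ.affineTransvection_add_apply_left h₁₃
  have hf₂ : f q₂ ≠ q₃ := fun h => hne₁₂ (f.injective (hf₁.trans h.symm))
  obtain ⟨g, hg, hg₃, hg₄⟩ := hQ.exists_mem_affineStabilizer_fixing hB
    (((hf q₂).trans h₁₂.symm).trans h₁₃) (h₁₄.symm.trans h₁₃) hf₂ hne₃₄.symm
  exact ⟨g * f, mul_mem hg hf, by simp [hf₁, hg₃], by simp [hg₄]⟩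

theorem exists_linearEquiv_add_map_pair (hQ : YieldsForm B Q) (hB : B.SeparatingLeft)
    {q₁ q₂ q₃ q₄ : V} (h₁₂ : Q q₁ = Q q₂) (h₁₃ : Q q₁ = Q q₃) (h₁₄ : Q q₁ = Q q₄)
    (hne₁₂ : q₁ ≠ q₂) (hne₃₄ : q₃ ≠ q₄) :
    ∃ (A : V ≃ₗ[ZMod 2] V) (w : V), (∀ x y, B (A x) (A y) = B x y) ∧
      (∀ v, Q (A v + w) = Q v) ∧ A q₁ + w = q₃ ∧ A q₂ + w = q₄ := by
  obtain ⟨f, hf, hf₁, hf₂⟩ :=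
    hQ.exists_mem_affineStabilizer_map_pair hB h₁₂ h₁₃ h₁₄ hne₁₂ hne₃₄
  have apply_eq (v : V) : f.linear v + f 0 = f v := by simpa using (f.map_vadd 0 v).symm
  refine ⟨f.linear, f 0, hQ.bilin_linear_of_mem_affineStabilizer hf, fun v => ?_, ?_, ?_⟩
  · rw [apply_eq, hf]
  · rw [apply_eq, hf₁]
  · rw [apply_eq, hf₂]

end YieldsForm

/-- (i) for every `B`-preserving linear automorphism `A` there is
a unique `v_A` in the quadric with `Q(Av + v_A) = Q(v)` for all `v`; (ii) the
induced affine action is doubly transitive on the quadric and on its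
complement. -/
theorem affine_symplectic_action_on_quadric
    {J : ℕ} (hJ : 0 < J)
    {V : Type*} [AddCommGroup V] [Module (ZMod 2) V] [Fintype V] [DecidableEq V]
    (hdim : Module.finrank (ZMod 2) V = 2 * J)
    (B : V →ₗ[ZMod 2] V →ₗ[ZMod 2] ZMod 2) (hB : IsSymplectic B)
    (Q : V → ZMod 2) (hQ : YieldsForm B Q) :
    (∀ A : V ≃ₗ[ZMod 2] V, (∀ x y : V, B (A x) (A y) = B x y) →
      ∃! vA : V, vA ∈ quadric Q ∧ ∀ v : V, Q (A v + vA) = Q v) ∧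
    (∀ q₁ q₂ q₃ q₄ : V,
      q₁ ∈ quadric Q → q₂ ∈ quadric Q → q₃ ∈ quadric Q → q₄ ∈ quadric Q →
      q₁ ≠ q₂ → q₃ ≠ q₄ →
      ∃ (A : V ≃ₗ[ZMod 2] V) (w : V),
        (∀ x y : V, B (A x) (A y) = B x y) ∧
        (∀ v : V, Q (A v + w) = Q v) ∧
        A q₁ + w = q₃ ∧ A q₂ + w = q₄) ∧
    (∀ q₁ q₂ q₃ q₄ : V,
      q₁ ∉ quadric Q → q₂ ∉ quadric Q → q₃ ∉ quadric Q → q₄ ∉ quadric Q →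
      q₁ ≠ q₂ → q₃ ≠ q₄ →
      ∃ (A : V ≃ₗ[ZMod 2] V) (w : V),
        (∀ x y : V, B (A x) (A y) = B x y) ∧
        (∀ v : V, Q (A v + w) = Q v) ∧
        A q₁ + w = q₃ ∧ A q₂ + w = q₄) := by
  refine ⟨fun A hA => hQ.existsUnique_mem_quadric_forall_map_add_eq hB.separatingLeft hA, ?_, ?_⟩
  · intro q₁ q₂ q₃ q₄ (h₁ : Q q₁ = 0) (h₂ : Q q₂ = 0) (h₃ : Q q₃ = 0) (h₄ : Q q₄ = 0)
    exact hQ.exists_linearEquiv_add_map_pair hB.separatingLeft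
      (h₁.trans h₂.symm) (h₁.trans h₃.symm) (h₁.trans h₄.symm)
  · intro q₁ q₂ q₃ q₄ h₁ h₂ h₃ h₄
    have same_value {q : V} (hq : q ∉ quadric Q) : Q q₁ = Q q :=
      (zmod_two_eq_one_of_ne_zero h₁).trans (zmod_two_eq_one_of_ne_zero hq).symm
    exact hQ.exists_linearEquiv_add_map_pair hB.separatingLeft
      (same_value h₂) (same_value h₃) (same_value h₄)
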